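/- Let X be a uniformly convex real Banach space and let r be a Helly sequence for X. Then the sequence (r_k) is strictly monotonically decreasing and converges to 0. -/

import Mathlib

open scoped Classical

noncomputable section

/-- `y` is quasi-orthogonal to `x`: some nonzero continuous linear functional attains
its norm on `x` and vanishes on `y`. -/
def QuasiOrth {X : Type*} [NormedAddCommGroup X] [NormedSpace ℝ X] (y x : X) : Prop :=
  ∃ f : X →L[ℝ] ℝ, f ≠ 0 ∧ f x = ‖f‖ * ‖x‖ ∧ f y = 0

/-- `ζ_X(ε) = inf {‖x + ε y‖ : ‖x‖ = ‖y‖ = 1, y ⌐ x}`. -/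
def zetaConv (X : Type*) [NormedAddCommGroup X] [NormedSpace ℝ X] (ε : ℝ) : ℝ :=
  sInf {t : ℝ | ∃ x y : X, ‖x‖ = 1 ∧ ‖y‖ = 1 ∧ QuasiOrth y x ∧ t = ‖x + ε • y‖}

/-- `ζ⁺_X(ε) = sup {‖x + ε y‖ : ‖x‖ = ‖y‖ = 1, y ⌐ x}`. -/
def zetaSmooth (X : Type*) [NormedAddCommGroup X] [NormedSpace ℝ X] (ε : ℝ) : ℝ :=
  sSup {t : ℝ | ∃ x y : X, ‖x‖ = 1 ∧ ‖y‖ = 1 ∧ QuasiOrth y x ∧ t = ‖x + ε • y‖}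

/-- The modulus of convexity `δ_X(ε)`. -/
def modConv (X : Type*) [NormedAddCommGroup X] [NormedSpace ℝ X] (ε : ℝ) : ℝ :=
  sInf {t : ℝ | ∃ x y : X, ‖x‖ ≤ 1 ∧ ‖y‖ ≤ 1 ∧ ε ≤ ‖x - y‖ ∧ t = 1 - ‖x + y‖ / 2}

/-- The modulus of smoothness `ρ_X(τ)`. -/
def modSmooth (X : Type*) [NormedAddCommGroup X] [NormedSpace ℝ X] (τ : ℝ) : ℝ :=
  sSup {t : ℝ | ∃ x y : X, ‖x‖ = 1 ∧ ‖y‖ = τ ∧ t = (‖x + y‖ + ‖x - y‖) / 2 - 1}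

/-- `X` is uniformly convex: the modulus of convexity is positive on `(0, 2]`. -/
def UnifConvex (X : Type*) [NormedAddCommGroup X] [NormedSpace ℝ X] : Prop :=
  ∀ ε ∈ Set.Ioc (0 : ℝ) 2, 0 < modConv X ε

/-- `X` is uniformly smooth: `ρ_X(τ)/τ → 0` as `τ → 0⁺`. -/
def UnifSmooth (X : Type*) [NormedAddCommGroup X] [NormedSpace ℝ X] : Prop :=
  Filter.Tendsto (fun τ => modSmooth X τ / τ) (nhdsWithin 0 (Set.Ioi 0)) (nhds 0)

/-- A Helly sequence for `X`: `r : {1,2,…} → (0,1]` with `r 1 = 1` and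
`r (j+1) * ζ_X (r (j+1)) = r j` for all `j ≥ 1`. -/
def IsHellySeq (X : Type*) [NormedAddCommGroup X] [NormedSpace ℝ X] (r : ℕ → ℝ) : Prop :=
  (∀ j : ℕ, 1 ≤ j → r j ∈ Set.Ioc (0 : ℝ) 1) ∧ r 1 = 1 ∧
    ∀ j : ℕ, 1 ≤ j → r (j + 1) * zetaConv X (r (j + 1)) = r j

end

/-!
If `y ⌐ x`, then `ε ↦ ‖x + ε y‖` is convex with minimum at `0`, so it is increasing on `[0, ∞)`, and
hence so is `ζ_X`. For unit vectors, the points `x` and `x + ε y` lie in the ball of radius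
`‖x + ε y‖ ≤ 1 + ε`, have distance `ε`, and their midpoint `x + (ε / 2) y` has norm at least `1`;
convexity of the ball therefore gives `1 + δ_X(ε / (1 + ε)) ≤ ζ_X(ε)`.

So `ζ_X > 1` on `(0, ∞)` and the recursion makes `r` strictly decreasing. A limit `L > 0` would
satisfy `L ζ_X(L) ≤ L` by monotonicity of `ζ_X`, which is impossible.
-/

section RealSequences

open Filter Topology

variable {u : ℕ → ℝ} {g : ℝ → ℝ}

theorem strictAnti_of_succ_mul_le (hg_one : ∀ t, 0 < t → 1 < g t) (hu_pos : ∀ n, 0 < u n)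
    (hu : ∀ n, u (n + 1) * g (u (n + 1)) ≤ u n) : StrictAnti u :=
  strictAnti_nat_of_succ_lt fun n =>
    (lt_mul_of_one_lt_right (hu_pos _) (hg_one _ (hu_pos _))).trans_le (hu n)

theorem tendsto_zero_of_succ_mul_le (hg : MonotoneOn g (Set.Ici 0))
    (hg_one : ∀ t, 0 < t → 1 < g t) (hu_pos : ∀ n, 0 < u n)
    (hu : ∀ n, u (n + 1) * g (u (n + 1)) ≤ u n) : Tendsto u atTop (𝓝 0) := by
  have hbdd : BddBelow (Set.range u) := ⟨0, Set.forall_mem_range.2 fun n => (hu_pos n).le⟩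
  have hlim : Tendsto u atTop (𝓝 (⨅ n, u n)) :=
    tendsto_atTop_ciInf (strictAnti_of_succ_mul_le hg_one hu_pos hu).antitone hbdd
  set L := ⨅ n, u n
  have hL_nonneg : 0 ≤ L := le_ciInf fun n => (hu_pos n).le
  rcases hL_nonneg.eq_or_lt with hL_zero | hL_pos
  · rwa [← hL_zero] at hlim
  · have hstep : ∀ n, u (n + 1) * g L ≤ u n := fun n =>
      (mul_le_mul_of_nonneg_left
        (hg hL_nonneg (hu_pos _).le (ciInf_le hbdd _)) (hu_pos _).le).trans (hu n)
    have hlimit : L * g L ≤ L :=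
      le_of_tendsto_of_tendsto' (((tendsto_add_atTop_iff_nat 1).2 hlim).mul_const _) hlim hstep
    exact absurd hlimit (lt_mul_of_one_lt_right hL_pos (hg_one L hL_pos)).not_ge

end RealSequences

section NormedSpace

variable {X : Type*} [NormedAddCommGroup X] [NormedSpace ℝ X] {x y : X} {ε : ℝ}

namespace QuasiOrth

theorem norm_le_norm_add_smul (h : QuasiOrth y x) (a : ℝ) : ‖x‖ ≤ ‖x + a • y‖ := by
  obtain ⟨f, hf, hfx, hfy⟩ := h
  refine le_of_mul_le_mul_left ?_ (norm_pos_iff.2 hf)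
  calc ‖f‖ * ‖x‖ = f (x + a • y) := by rw [map_add, map_smul, hfx, hfy, smul_zero, add_zero]
    _ ≤ ‖f (x + a • y)‖ := Real.le_norm_self _
    _ ≤ ‖f‖ * ‖x + a • y‖ := f.le_opNorm _

theorem monotoneOn_norm_add_smul (h : QuasiOrth y x) :
    MonotoneOn (fun a : ℝ => ‖x + a • y‖) (Set.Ici 0) := by
  intro a ha b _ hab
  rcases (ha.trans hab).eq_or_lt with hb | hb
  · rw [hab.antisymm (hb.symm.trans_le ha)]
  have hmem : x + a • y ∈ segment ℝ x (x + b • y) := by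
    rw [segment_eq_image']
    refine ⟨a / b, ⟨div_nonneg ha hb.le, div_le_one_of_le₀ hab hb.le⟩, ?_⟩
    simp only [add_sub_cancel_left, smul_smul, div_mul_cancel₀ a hb.ne']
  calc ‖x + a • y‖ ≤ max ‖x‖ ‖x + b • y‖ :=
        convexOn_univ_norm.le_max_of_mem_segment (Set.mem_univ _) (Set.mem_univ _) hmem
    _ = ‖x + b • y‖ := max_eq_right (h.norm_le_norm_add_smul b)

end QuasiOrth

theorem one_sub_norm_add_div_two_nonneg {E : Type*} [SeminormedAddGroup E] {x y : E}
    (hx : ‖x‖ ≤ 1) (hy : ‖y‖ ≤ 1) : 0 ≤ 1 - ‖x + y‖ / 2 := by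
  linarith [norm_add_le x y]

variable (X) in
theorem modConv_nonneg (ε : ℝ) : 0 ≤ modConv X ε := by
  refine Real.sInf_nonneg ?_
  rintro _ ⟨x, y, hx, hy, -, rfl⟩
  exact one_sub_norm_add_div_two_nonneg hx hy

theorem modConv_le (hx : ‖x‖ ≤ 1) (hy : ‖y‖ ≤ 1) (hxy : ε ≤ ‖x - y‖) :
    modConv X ε ≤ 1 - ‖x + y‖ / 2 := by
  refine csInf_le ⟨0, ?_⟩ ⟨x, y, hx, hy, hxy, rfl⟩
  rintro _ ⟨a, b, ha, hb, -, rfl⟩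
  exact one_sub_norm_add_div_two_nonneg ha hb

theorem norm_add_div_two_le_mul_one_sub_modConv {R : ℝ} (hR : 0 < R) (hx : ‖x‖ ≤ R)
    (hy : ‖y‖ ≤ R) (hxy : ε * R ≤ ‖x - y‖) : ‖x + y‖ / 2 ≤ R * (1 - modConv X ε) := by
  have norm_scaled (z : X) : ‖R⁻¹ • z‖ = ‖z‖ / R := by
    rw [norm_smul_of_nonneg (inv_nonneg.2 hR.le), inv_mul_eq_div]
  have hδ : modConv X ε ≤ 1 - ‖R⁻¹ • x + R⁻¹ • y‖ / 2 := by
    apply modConv_le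
    · rwa [norm_scaled, div_le_one hR]
    · rwa [norm_scaled, div_le_one hR]
    · rwa [← smul_sub, norm_scaled, le_div_iff₀ hR]
  rw [← smul_add, norm_scaled] at hδ
  calc ‖x + y‖ / 2 = R * (‖x + y‖ / R / 2) := by field_simp
    _ ≤ R * (1 - modConv X ε) := mul_le_mul_of_nonneg_left (by linarith) hR.le

theorem QuasiOrth.one_add_modConv_le_norm_add_smul (h : QuasiOrth y x) (hx : ‖x‖ = 1)
    (hy : ‖y‖ = 1) (hε : 0 ≤ ε) : 1 + modConv X (ε / (1 + ε)) ≤ ‖x + ε • y‖ := by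
  have norm_smul_y : ‖ε • y‖ = ε := by rw [norm_smul_of_nonneg hε, hy, mul_one]
  have one_le : 1 ≤ ‖x + ε • y‖ := hx ▸ h.norm_le_norm_add_smul ε
  have le_one_add : ‖x + ε • y‖ ≤ 1 + ε := by
    simpa only [hx, norm_smul_y] using norm_add_le x (ε • y)
  have separation : ε / (1 + ε) * ‖x + ε • y‖ ≤ ‖x - (x + ε • y)‖ := by
    rw [sub_add_cancel_left, norm_neg, norm_smul_y, div_mul_eq_mul_div,
      div_le_iff₀ (by linarith)]
    exact mul_le_mul_of_nonneg_left le_one_add hε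
  have midpoint : 1 ≤ ‖x + (x + ε • y)‖ / 2 := by
    have hmid : x + (x + ε • y) = (2 : ℝ) • (x + (ε / 2) • y) := by module
    rw [hmid, norm_smul_of_nonneg zero_le_two, mul_div_cancel_left₀ _ two_ne_zero, ← hx]
    exact h.norm_le_norm_add_smul (ε / 2)
  have hδ := norm_add_div_two_le_mul_one_sub_modConv (by linarith) (hx.trans_le one_le) le_rfl
    separation
  linarith [le_mul_of_one_le_left (modConv_nonneg X (ε / (1 + ε))) one_le]

variable (X) in
/-- The pairs `(x, y)` of unit vectors with `y ⌐ x`: the index set of the infimum defining `ζ_X`,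
which does not depend on `ε`. -/
def unitQuasiOrthPairs : Set (X × X) := {p | ‖p.1‖ = 1 ∧ ‖p.2‖ = 1 ∧ QuasiOrth p.2 p.1}

theorem zetaConv_eq_iInf (ε : ℝ) :
    zetaConv X ε = ⨅ p : unitQuasiOrthPairs X, ‖p.1.1 + ε • p.1.2‖ := by
  refine congrArg sInf (Set.ext fun t => ⟨?_, ?_⟩)
  · rintro ⟨x, y, hx, hy, h, rfl⟩
    exact ⟨⟨(x, y), hx, hy, h⟩, rfl⟩
  · rintro ⟨⟨⟨x, y⟩, hx, hy, h⟩, rfl⟩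
    exact ⟨x, y, hx, hy, h, rfl⟩

theorem monotoneOn_zetaConv : MonotoneOn (zetaConv X) (Set.Ici 0) := by
  intro a ha b hb hab
  rw [zetaConv_eq_iInf, zetaConv_eq_iInf]
  exact ciInf_mono ⟨0, Set.forall_mem_range.2 fun _ => norm_nonneg _⟩
    fun p => p.2.2.2.monotoneOn_norm_add_smul ha hb hab

theorem one_add_modConv_le_zetaConv [Nonempty (unitQuasiOrthPairs X)] (hε : 0 ≤ ε) :
    1 + modConv X (ε / (1 + ε)) ≤ zetaConv X ε := by
  rw [zetaConv_eq_iInf]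
  exact le_ciInf fun p => p.2.2.2.one_add_modConv_le_norm_add_smul p.2.1 p.2.2.1 hε

theorem UnifConvex.one_lt_zetaConv [Nonempty (unitQuasiOrthPairs X)] (hX : UnifConvex X)
    (hε : 0 < ε) : 1 < zetaConv X ε := by
  have hle : ε / (1 + ε) ≤ 1 := div_le_one_of_le₀ (by linarith) (by linarith)
  have hδ : 0 < modConv X (ε / (1 + ε)) := hX _ ⟨by positivity, hle.trans one_le_two⟩
  exact (lt_add_of_pos_right 1 hδ).trans_le (one_add_modConv_le_zetaConv hε.le)

/- Without quasi-orthogonal unit vectors, as in dimension at most one, `ζ_X` takes the junk value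
`sInf ∅ = 0`, which the recursion `r 2 * ζ_X (r 2) = r 1 = 1` rules out. -/
theorem IsHellySeq.nonempty_unitQuasiOrthPairs {r : ℕ → ℝ} (hr : IsHellySeq X r) :
    Nonempty (unitQuasiOrthPairs X) := by
  by_contra hempty
  rw [not_nonempty_iff] at hempty
  have hrec : r 2 * zetaConv X (r 2) = 1 := (hr.2.2 1 le_rfl).trans hr.2.1
  rw [zetaConv_eq_iInf, Real.iInf_of_isEmpty, mul_zero] at hrec
  exact zero_ne_one hrec

end NormedSpace

theorem helly_sequence_strictAnti_tendsto_zero_general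
    {X : Type*} [NormedAddCommGroup X] [NormedSpace ℝ X]
    (hX : UnifConvex X) {r : ℕ → ℝ} (hr : IsHellySeq X r) :
    (∀ j : ℕ, 1 ≤ j → r (j + 1) < r j) ∧
      Filter.Tendsto r Filter.atTop (nhds 0) := by
  have : Nonempty (unitQuasiOrthPairs X) := hr.nonempty_unitQuasiOrthPairs
  have hζ : ∀ t, 0 < t → 1 < zetaConv X t := fun _ => hX.one_lt_zetaConv
  have hpos : ∀ n, 0 < r (n + 1) := fun n => (hr.1 (n + 1) n.succ_pos).1
  have hrec : ∀ n, r (n + 1 + 1) * zetaConv X (r (n + 1 + 1)) ≤ r (n + 1) := fun n =>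
    (hr.2.2 (n + 1) n.succ_pos).le
  constructor
  · intro j hj
    obtain ⟨n, rfl⟩ := Nat.exists_eq_add_of_le' hj
    exact strictAnti_of_succ_mul_le (u := fun n => r (n + 1)) hζ hpos hrec n.lt_succ_self
  · rw [← Filter.tendsto_add_atTop_iff_nat 1]
    exact tendsto_zero_of_succ_mul_le monotoneOn_zetaConv hζ hpos hrec

/-- **The Helly sequence of a uniformly convex Banach space is strictly decreasing
and tends to zero.** -/
theorem helly_sequence_strictAnti_tendsto_zero
    {X : Type*} [NormedAddCommGroup X] [NormedSpace ℝ X] [CompleteSpace X]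
    (hX : UnifConvex X) {r : ℕ → ℝ} (hr : IsHellySeq X r) :
    (∀ j : ℕ, 1 ≤ j → r (j + 1) < r j) ∧
      Filter.Tendsto r Filter.atTop (nhds 0) :=
  helly_sequence_strictAnti_tendsto_zero_general hX hr
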